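/- arXiv:2501.16136 — 3 statements merged into one kernel-verified Lean document; each statement's English description precedes it below -/
import Mathlib

section
/- Let n be a positive even integer, n = 2m. For vectors a, b, c, c' of length n over GF(2), write a_L and a_R for the left half (entries 0,…,m−1) and right half (entries m,…,n−1) of a, and similarly for b, c, c'. Then g(a,b,c) ⊕ h(a,b,c') = g(a_L ⊕ a_R, b_L ⊕ b_R, c_R) ⊕ h(a_L ⊕ a_R, b_L ⊕ b_R, c'_L) ⊕ g(a_R, b_R, c'_L ⊕ c_R) ⊕ h(a_R, b_R, c'_L ⊕ c'_R) ⊕ g(a_L, b_L, c_L ⊕ c_R) ⊕ h(a_L, b_L, c'_L ⊕ c_R), where ⊕ on vectors denotes entrywise addition in GF(2), and g, h on the right-hand side are the corresponding polynomials for vectors of length m. -/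
/-- `g(a,b,c) = Σ_{i=0}^{n-1} Σ_{j=0}^{i} a_j b_{i-j} c_i` over `GF(2)`. -/
def gPoly (n : ℕ) (a b c : ℕ → ZMod 2) : ZMod 2 :=
  ∑ i ∈ Finset.range n, ∑ j ∈ Finset.range (i + 1), a j * b (i - j) * c i

/-- `h(a,b,c') = Σ_{i=0}^{n-2} Σ_{j=i+1}^{n-1} a_j b_{n+i-j} c'_i` over `GF(2)`. -/
def hPoly (n : ℕ) (a b c' : ℕ → ZMod 2) : ZMod 2 :=
  ∑ i ∈ Finset.range (n - 1), ∑ j ∈ Finset.Ico (i + 1) n, a j * b (n + i - j) * c' i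

/-- `gPoly` as a sum over the square of index pairs, keeping those with `j + k < n`. -/
theorem gPoly_eq_sum_square (n : ℕ) (a b c : ℕ → ZMod 2) :
    gPoly n a b c = ∑ j ∈ Finset.range n, ∑ k ∈ Finset.range n,
      if j + k < n then a j * b k * c (j + k) else 0 := by
  rw [gPoly, Finset.sum_sigma', ← Finset.sum_product', ← Finset.sum_filter]
  refine Finset.sum_bij' (fun p _ => (p.2, p.1 - p.2)) (fun q _ => ⟨q.1 + q.2, q.1⟩) ?_ ?_ ?_ ?_ ?_
  · rintro ⟨i, j⟩ h
    simp only [Finset.mem_sigma, Finset.mem_filter, Finset.mem_product, Finset.mem_range] at h ⊢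
    omega
  · rintro ⟨j, k⟩ h
    simp only [Finset.mem_sigma, Finset.mem_filter, Finset.mem_product, Finset.mem_range] at h ⊢
    omega
  · rintro ⟨i, j⟩ h
    simp only [Finset.mem_sigma, Finset.mem_range] at h
    simp only [show j + (i - j) = i by omega]
  · rintro ⟨j, k⟩ -
    simp
  · rintro ⟨i, j⟩ h
    simp only [Finset.mem_sigma, Finset.mem_range] at h
    simp only [show j + (i - j) = i by omega]

/-- `hPoly` as a sum over the square of index pairs, keeping those with `n ≤ j + k`. -/
theorem hPoly_eq_sum_square (n : ℕ) (a b c' : ℕ → ZMod 2) :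
    hPoly n a b c' = ∑ j ∈ Finset.range n, ∑ k ∈ Finset.range n,
      if n ≤ j + k then a j * b k * c' (j + k - n) else 0 := by
  rw [hPoly, Finset.sum_sigma', ← Finset.sum_product', ← Finset.sum_filter]
  refine Finset.sum_bij' (fun p _ => (p.2, n + p.1 - p.2)) (fun q _ => ⟨q.1 + q.2 - n, q.1⟩)
    ?_ ?_ ?_ ?_ ?_
  · rintro ⟨i, j⟩ h
    simp only [Finset.mem_sigma, Finset.mem_filter, Finset.mem_product, Finset.mem_range,
      Finset.mem_Ico] at h ⊢
    omega
  · rintro ⟨j, k⟩ h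
    simp only [Finset.mem_sigma, Finset.mem_filter, Finset.mem_product, Finset.mem_range,
      Finset.mem_Ico] at h ⊢
    omega
  · rintro ⟨i, j⟩ h
    simp only [Finset.mem_sigma, Finset.mem_range, Finset.mem_Ico] at h
    simp only [show j + (n + i - j) - n = i by omega]
  · rintro ⟨j, k⟩ h
    simp only [Finset.mem_filter, Finset.mem_product, Finset.mem_range] at h
    simp only [show n + (j + k - n) - j = k by omega]
  · rintro ⟨i, j⟩ h
    simp only [Finset.mem_sigma, Finset.mem_range, Finset.mem_Ico] at h
    simp only [show j + (n + i - j) - n = i by omega]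

/-- A sum over a square of side `2 * m` is the sum over its four quadrants. -/
theorem sum_square_two_mul {M : Type*} [AddCommMonoid M] (m : ℕ) (f : ℕ → ℕ → M) :
    ∑ j ∈ Finset.range (2 * m), ∑ k ∈ Finset.range (2 * m), f j k =
      ∑ j ∈ Finset.range m, ∑ k ∈ Finset.range m,
        (f j k + f j (m + k) + (f (m + j) k + f (m + j) (m + k))) := by
  simp only [two_mul, Finset.sum_range_add, Finset.sum_add_distrib]
  exact add_add_add_comm _ _ _ _

/-- Theorem 1 of the paper: the Karatsuba-like recursive decomposition of
`g(a,b,c) ⊕ h(a,b,c')` for vectors of even length `n = 2m`. -/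
theorem gf_mult_recursive (m : ℕ) (hm : 0 < m) (a b c c' : ℕ → ZMod 2) :
    gPoly (2 * m) a b c + hPoly (2 * m) a b c' =
      gPoly m (fun i => a i + a (m + i)) (fun i => b i + b (m + i)) (fun i => c (m + i))
    + hPoly m (fun i => a i + a (m + i)) (fun i => b i + b (m + i)) (fun i => c' i)
    + gPoly m (fun i => a (m + i)) (fun i => b (m + i)) (fun i => c' i + c (m + i))
    + hPoly m (fun i => a (m + i)) (fun i => b (m + i)) (fun i => c' i + c' (m + i))
    + gPoly m (fun i => a i) (fun i => b i) (fun i => c i + c (m + i))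
    + hPoly m (fun i => a i) (fun i => b i) (fun i => c' i + c (m + i)) := by
  simp only [gPoly_eq_sum_square, hPoly_eq_sum_square, sum_square_two_mul,
    ← Finset.sum_add_distrib]
  refine Finset.sum_congr rfl fun j hj => Finset.sum_congr rfl fun k hk => ?_
  rw [Finset.mem_range] at hj hk
  have two_eq_zero : (2 : ZMod 2) = 0 := rfl
  have left_right : j + (m + k) = m + (j + k) := by omega
  have right_left : m + j + k = m + (j + k) := by omega
  have right_right : m + j + (m + k) = 2 * m + (j + k) := by omega
  simp only [left_right, right_left, right_right]
  rcases lt_or_ge (j + k) m with h | h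
  · simp only [h, h.not_ge, show j + k < 2 * m by omega, show ¬ 2 * m ≤ j + k by omega,
      show m + (j + k) < 2 * m by omega, show ¬ 2 * m ≤ m + (j + k) by omega,
      show ¬ 2 * m + (j + k) < 2 * m by omega, show 2 * m ≤ 2 * m + (j + k) by omega,
      Nat.add_sub_cancel_left, if_true, if_false]
    linear_combination
      (-(a j * b k * c (m + (j + k))) - a (m + j) * b (m + k) * c (m + (j + k))) * two_eq_zero
  · simp only [h, h.not_gt, show j + k < 2 * m by omega, show ¬ 2 * m ≤ j + k by omega,
      show ¬ m + (j + k) < 2 * m by omega, show 2 * m ≤ m + (j + k) by omega,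
      show ¬ 2 * m + (j + k) < 2 * m by omega, show 2 * m ≤ 2 * m + (j + k) by omega,
      show m + (j + k) - 2 * m = j + k - m by omega, show m + (j + k - m) = j + k by omega,
      Nat.add_sub_cancel_left, if_true, if_false]
    linear_combination
      (-(a j * b k * c' (j + k - m)) - a (m + j) * b (m + k) * c' (j + k - m)) * two_eq_zero
end

section
/- Let n be a positive even integer, n = 2m. For vectors a, b, c of length n over GF(2), with a_L, a_R denoting the left half (entries 0,…,m−1) and right half (entries m,…,n−1) of a, and similarly for b and c, one has g(a, b, c) = g(a_L ⊕ a_R, b_L ⊕ b_R, c_R) ⊕ g(a_R, b_R, c_R) ⊕ g(a_L, b_L, c_L ⊕ c_R) ⊕ h(a_L, b_L, c_R), where ⊕ on vectors denotes entrywise addition in GF(2), and g, h on the right-hand side are the corresponding polynomials for vectors of length m. -/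
/-- The outer sum defining `hPoly` may be extended by its (empty) last term. -/
theorem hPoly_eq_sum_range (n : ℕ) (a b c : ℕ → ZMod 2) :
    hPoly n a b c =
      ∑ i ∈ Finset.range n, ∑ j ∈ Finset.Ico (i + 1) n, a j * b (n + i - j) * c i := by
  cases n with
  | zero => rfl
  | succ k => simp [hPoly, Finset.sum_range_succ _ k]

/-- Splitting a convolution sum at index `m + i` into the three ranges
`[0, i]`, `(i, m)` and `[m, m + i]`. -/
theorem sum_range_convolution_split {R : Type*} [NonUnitalNonAssocSemiring R] {m i : ℕ}
    (hi : i < m) (a b : ℕ → R) :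
    ∑ j ∈ Finset.range (m + i + 1), a j * b (m + i - j) =
      ∑ j ∈ Finset.range (i + 1), a j * b (m + (i - j))
      + ∑ j ∈ Finset.Ico (i + 1) m, a j * b (m + i - j)
      + ∑ j ∈ Finset.range (i + 1), a (m + j) * b (i - j) := by
  rw [add_assoc m i 1, Finset.sum_range_add,
    ← Finset.sum_range_add_sum_Ico _ (Nat.succ_le_of_lt hi)]
  congr 1
  · congr 1
    refine Finset.sum_congr rfl fun j hj => ?_
    rw [Nat.add_sub_assoc (Nat.lt_succ_iff.mp (Finset.mem_range.mp hj))]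
  · simp only [Nat.add_sub_add_left]

/-- Recursive decomposition of `g(a,b,c)` for vectors of even length `n = 2m`
(Equation (32) of the paper). -/
theorem gf_g_recursive (m : ℕ) (hm : 0 < m) (a b c : ℕ → ZMod 2) :
    gPoly (2 * m) a b c =
      gPoly m (fun i => a i + a (m + i)) (fun i => b i + b (m + i)) (fun i => c (m + i))
    + gPoly m (fun i => a (m + i)) (fun i => b (m + i)) (fun i => c (m + i))
    + gPoly m (fun i => a i) (fun i => b i) (fun i => c i + c (m + i))
    + hPoly m (fun i => a i) (fun i => b i) (fun i => c (m + i)) := by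
  have two_eq_zero : (2 : ZMod 2) = 0 := rfl
  rw [hPoly_eq_sum_range]
  simp only [gPoly, two_mul m]
  rw [Finset.sum_range_add _ m m]
  simp only [← Finset.sum_add_distrib, ← Finset.sum_mul]
  refine Finset.sum_congr rfl fun i hi => ?_
  rw [sum_range_convolution_split (Finset.mem_range.mp hi)]
  simp only [add_mul, mul_add, Finset.sum_add_distrib]
  linear_combination
    -(∑ j ∈ Finset.range (i + 1), a j * b (i - j)
      + ∑ j ∈ Finset.range (i + 1), a (m + j) * b (m + (i - j))) * c (m + i) * two_eq_zero
end

section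
/- Let P(x) = x^n + x^k + 1 be a trinomial over GF(2) with 1 < k < n. Then for all integers i ≥ 0 and j ≥ 0, the closed-form congruence x^{k+i+j(n−k)} + x^{i+j(n−k)} ≡ x^{k+i} + Σ_{t=0}^{j} x^{i+t(n−k)} (mod P(x)) holds in the polynomial ring GF(2)[x]. -/
open Polynomial

/-- For a trinomial `P(x) = xⁿ + xᵏ + 1` over `GF(2)` with `1 < k < n`, for all
`i ≥ 0` and `j ≥ 0` one has the closed-form congruence
`x^{k+i+j(n-k)} + x^{i+j(n-k)} ≡ x^{k+i} + Σ_{t=0}^{j} x^{i+t(n-k)}` modulo `P(x)`,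
i.e. `P` divides the difference of the two sides in `GF(2)[x]`. -/
theorem trinomial_reduction_closed_form (n k : ℕ) (hk1 : 1 < k) (hkn : k < n)
    (i j : ℕ) :
    (X ^ n + X ^ k + 1 : (ZMod 2)[X]) ∣
      (X ^ (k + i + j * (n - k)) + X ^ (i + j * (n - k)))
      - (X ^ (k + i) + ∑ t ∈ Finset.range (j + 1), X ^ (i + t * (n - k))) := by
  obtain ⟨d, rfl⟩ := Nat.exists_eq_add_of_lt hkn
  rw [show k + d + 1 - k = d + 1 by omega]
  induction j with
  | zero => simp
  | succ j ih =>
    rw [Finset.sum_range_succ]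
    have hstep : (X ^ (k + d + 1) + X ^ k + 1 : (ZMod 2)[X]) ∣
        X ^ (i + j * (d + 1)) * (X ^ (k + d + 1) - X ^ k - 1) := by
      rw [CharTwo.sub_eq_add, CharTwo.sub_eq_add]
      exact dvd_mul_left _ _
    convert dvd_add ih hstep using 1
    ring
end
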